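/- arXiv:1612.08698 — 3 statements merged into one kernel-verified Lean document; each statement's English description precedes it below -/
import Mathlib

section
/- Let d be a positive integer and let r : {1,…,d} → Z≥0 be a function such that Σ_{i=1}^d r(i) = d. Let R = {t ∈ {1,…,d} : r(t) > 0} and k = |R|. Then there are exactly k!·(d−k)! bijections π ∈ S_d^0 such that π + r ∈ S_d, and moreover sgn(π)·sgn(π + r) = (−1)^{k+d} for each such bijection π. -/
/-- The sign of a bijection `π` (given by its inversion count). -/
def bijSign (d : ℕ) (π : Fin d → ℕ) : ℤ :=
  (-1) ^ (Finset.univ.filter fun p : Fin d × Fin d => p.1 < p.2 ∧ π p.2 < π p.1).card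

open Finset in
theorem aux_card {ι : Type*} [Fintype ι] (d : ℕ) (hc : Fintype.card ι = d) (f : ι → ℕ)
    (hf : Function.Injective f) (hlt : ∀ i, f i < d) (y : ℕ) (hy : y ≤ d) :
    (univ.filter fun s => f s < y).card = y := by
  classical
  have himg : (univ : Finset ι).image f = range d := by
    apply Finset.eq_of_subset_of_card_le
    · intro x hx
      obtain ⟨i, -, rfl⟩ := Finset.mem_image.1 hx
      exact Finset.mem_range.2 (hlt i)
    · rw [Finset.card_image_of_injective _ hf, Finset.card_univ, hc, Finset.card_range]
  have h2 : (univ.filter fun s => f s < y).image f = range y := by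
    ext x
    simp only [Finset.mem_image, Finset.mem_filter, Finset.mem_univ, true_and, Finset.mem_range]
    constructor
    · rintro ⟨i, hi, rfl⟩; exact hi
    · intro hx
      have : x ∈ (univ : Finset ι).image f := by rw [himg]; exact Finset.mem_range.2 (by omega)
      obtain ⟨i, -, rfl⟩ := Finset.mem_image.1 this
      exact ⟨i, hx, rfl⟩
  rw [← Finset.card_image_of_injective _ hf, h2, Finset.card_range]

open Finset in
theorem aux_sum {ι : Type*} [DecidableEq ι] (A : Finset ι) (x : ℕ) (hc : A.card = x) (f : ι → ℕ)
    (hf : Function.Injective f) (hlt : ∀ i ∈ A, f i < x) :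
    ∑ i ∈ A, f i = ∑ y ∈ range x, y := by
  have himg : A.image f = range x := by
    apply Finset.eq_of_subset_of_card_le
    · intro z hz
      obtain ⟨i, hi, rfl⟩ := Finset.mem_image.1 hz
      exact Finset.mem_range.2 (hlt i hi)
    · rw [Finset.card_image_of_injective _ hf, hc, Finset.card_range]
  rw [← himg, Finset.sum_image (fun a _ b _ h => hf h)]

/-- The set of admissible bijections. -/
def IsGood (d : ℕ) (r π : Fin d → ℕ) : Prop :=
  Function.Injective π ∧ (∀ i, π i < d) ∧
        Function.Injective (fun i => π i + r i) ∧
        (∀ i, 1 ≤ π i + r i ∧ π i + r i ≤ d)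

theorem aux_sub {d : ℕ} {r π : Fin d → ℕ} (h : IsGood d r π) (y : ℕ) (hy : y ≤ d) :
    (Finset.univ.filter fun s => π s + r s ≤ y).card = y := by
  obtain ⟨h1, h2, h3, h4⟩ := h
  have := aux_card d (Fintype.card_fin d) (fun i => π i + r i - 1) (by
    intro a b hab
    apply h3
    have := h4 a
    have := h4 b
    simp only at hab ⊢
    omega) (by
    intro i
    have := h4 i
    omega) y hy
  rw [← this]
  congr 1
  ext s
  have := h4 s
  simp only [Finset.mem_filter, Finset.mem_univ, true_and]
  omega

theorem aux_one {d : ℕ} {r π : Fin d → ℕ} (h : IsGood d r π) (y : ℕ) (hy : y < d) :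
    ∃! s, π s ≤ y ∧ y < π s + r s := by
  classical
  have e1 := aux_sub h y hy.le
  have e2 := aux_card d (Fintype.card_fin d) π h.1 h.2.1 (y+1) hy
  have hsub : (Finset.univ.filter fun s => π s + r s ≤ y) ⊆
      (Finset.univ.filter fun s => π s < y + 1) := by
    intro s
    simp only [Finset.mem_filter, Finset.mem_univ, true_and]
    omega
  have e3 := Finset.card_sdiff_of_subset hsub
  rw [e1, e2, Nat.add_sub_cancel_left, Finset.card_eq_one] at e3
  obtain ⟨s, hs⟩ := e3
  have key : ∀ u, (π u ≤ y ∧ y < π u + r u) ↔ u = s := by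
    intro u
    rw [← Finset.mem_singleton, ← hs]
    simp only [Finset.mem_sdiff, Finset.mem_filter, Finset.mem_univ, true_and]
    omega
  exact ⟨s, (key s).2 rfl, fun u hu => (key u).1 hu⟩

theorem aux_good_sum {d : ℕ} {r π : Fin d → ℕ} (h : IsGood d r π) (t : Fin d) (ht : 0 < r t) :
    π t = ∑ s ∈ Finset.univ.filter (fun s => π s < π t), r s := by
  classical
  have c := aux_card d (Fintype.card_fin d) π h.1 h.2.1 (π t) (h.2.1 t).le
  have hle : ∀ s, π s < π t → π s + r s ≤ π t := by
    intro s hs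
    by_contra hcon
    obtain ⟨u, -, hu⟩ := aux_one h (π t) (h.2.1 t)
    have a1 := hu t ⟨le_rfl, by omega⟩
    have a2 := hu s ⟨hs.le, by omega⟩
    rw [a1, a2] at hs
    exact lt_irrefl _ hs
  have s1 := aux_sum _ _ c π h.1 (by simp)
  have s2 := aux_sum _ _ c (fun i => π i + r i - 1) (by
    intro a b hab
    apply h.2.2.1
    have := h.2.2.2 a
    have := h.2.2.2 b
    simp only at hab ⊢
    omega) (by
    intro i hi
    have := h.2.2.2 i
    have := hle i (by simpa using hi)
    omega)
  have s3 : ∑ i ∈ Finset.univ.filter (fun s => π s < π t), ((π i + r i - 1) + 1) =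
    ∑ i ∈ Finset.univ.filter (fun s => π s < π t), (π i + r i) := by
    apply Finset.sum_congr rfl
    intro i _
    have := h.2.2.2 i
    omega
  rw [Finset.sum_add_distrib, Finset.sum_add_distrib, s2, s1, Finset.sum_const, c] at s3
  simp at s3
  exact s3

theorem aux_conv {d : ℕ} (hd : 0 < d) {r π : Fin d → ℕ} (hr : ∑ i, r i = d)
    (h1 : Function.Injective π) (h2 : ∀ i, π i < d)
    (h3 : ∀ t, 0 < r t → π t = ∑ s ∈ Finset.univ.filter (fun s => π s < π t), r s) :
    IsGood d r π := by
  classical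
  have hplus : ∀ t, 0 < r t →
      π t + r t = ∑ s ∈ Finset.univ.filter (fun s => π s ≤ π t), r s := by
    intro t ht
    have : (Finset.univ.filter (fun s => π s ≤ π t)) =
        insert t (Finset.univ.filter (fun s => π s < π t)) := by
      ext s
      simp only [Finset.mem_filter, Finset.mem_univ, true_and, Finset.mem_insert]
      constructor
      · intro h
        rcases h.lt_or_eq with h | h
        · exact Or.inr h
        · exact Or.inl (h1 h)
      · rintro (rfl | h)
        · exact le_rfl
        · exact h.le
    rw [this, Finset.sum_insert (by simp), ← h3 t ht, add_comm]
  have hmono : ∀ s t, 0 < r s → 0 < r t → π s < π t → π s + r s ≤ π t := by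
    intro s t hs ht hst
    rw [hplus s hs, h3 t ht]
    apply Finset.sum_le_sum_of_subset
    intro u
    simp only [Finset.mem_filter, Finset.mem_univ, true_and]
    omega
  have hnext : ∀ s t, 0 < r s → r t = 0 → π s + r s ≠ π t := by
    intro s t hs ht heq
    by_cases hne : (Finset.univ.filter (fun u => 0 < r u ∧ π s < π u)).Nonempty
    · obtain ⟨u, hu, hmin⟩ := Finset.exists_min_image _ π hne
      simp only [Finset.mem_filter, Finset.mem_univ, true_and] at hu hmin
      have : π u = π s + r s := by
        rw [h3 u hu.1, hplus s hs]
        symm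
        apply Finset.sum_subset
        · intro v
          simp only [Finset.mem_filter, Finset.mem_univ, true_and]
          omega
        · intro v
          simp only [Finset.mem_filter, Finset.mem_univ, true_and]
          intro a b
          by_contra hv
          have := hmin v ⟨by omega, by omega⟩
          omega
      have : u = t := h1 (by omega)
      subst this
      omega
    · rw [Finset.not_nonempty_iff_eq_empty] at hne
      have : π s + r s = d := by
        refine (hplus s hs).trans (Eq.trans ?_ hr)
        apply Finset.sum_subset (Finset.subset_univ _)
        intro v
        simp only [Finset.mem_filter, Finset.mem_univ, true_and]
        intro _ b
        by_contra hv
        have : v ∈ (Finset.univ.filter (fun u => 0 < r u ∧ π s < π u)) := by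
          simp only [Finset.mem_filter, Finset.mem_univ, true_and]
          omega
        rw [hne] at this
        simp at this
      have := h2 t
      omega
  have hzero : ∃ t, 0 < r t ∧ π t = 0 := by
    have hne : (Finset.univ.filter (fun u => 0 < r u)).Nonempty := by
      by_contra hcon
      rw [Finset.not_nonempty_iff_eq_empty] at hcon
      have : ∑ i, r i = 0 := by
        apply Finset.sum_eq_zero
        intro i _
        by_contra hi
        have : i ∈ (Finset.univ.filter (fun u => 0 < r u)) := by
          simp only [Finset.mem_filter, Finset.mem_univ, true_and]
          omega
        rw [hcon] at this
        simp at this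
      omega
    obtain ⟨u, hu, hmin⟩ := Finset.exists_min_image _ π hne
    simp only [Finset.mem_filter, Finset.mem_univ, true_and] at hu hmin
    refine ⟨u, hu, ?_⟩
    rw [h3 u hu]
    apply Finset.sum_eq_zero
    intro i
    simp only [Finset.mem_filter, Finset.mem_univ, true_and]
    intro hi
    by_contra hc
    have := hmin i (by omega)
    omega
  refine ⟨h1, h2, ?_, ?_⟩
  · intro s t hst
    simp only at hst
    rcases Nat.eq_zero_or_pos (r s) with hs | hs <;> rcases Nat.eq_zero_or_pos (r t) with ht | ht
    · exact h1 (by omega)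
    · exact absurd (by omega) (hnext t s ht hs)
    · exact absurd (by omega) (hnext s t hs ht)
    · rcases lt_trichotomy (π s) (π t) with h | h | h
      · have := hmono s t hs ht h
        omega
      · exact h1 h
      · have := hmono t s ht hs h
        omega
  · intro i
    rcases Nat.eq_zero_or_pos (r i) with hi | hi
    · refine ⟨?_, ?_⟩
      · by_contra hc
        obtain ⟨t, ht, ht0⟩ := hzero
        have : t = i := h1 (by omega)
        subst this
        omega
      · have := h2 i
        omega
    · refine ⟨by omega, ?_⟩
      rw [hplus i hi]
      exact (Finset.sum_le_sum_of_subset (Finset.subset_univ _)).trans hr.le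

theorem aux_sign {d : ℕ} {r π : Fin d → ℕ} (h : IsGood d r π) :
    bijSign d π * bijSign d (fun i => π i + r i) =
        (-1) ^ ((Finset.univ.filter fun t => 0 < r t).card + d) := by
  classical
  unfold bijSign
  set I := Finset.univ.filter fun p : Fin d × Fin d => p.1 < p.2 ∧ π p.2 < π p.1 with hI
  set J := Finset.univ.filter fun p : Fin d × Fin d =>
    p.1 < p.2 ∧ π p.2 + r p.2 < π p.1 + r p.1 with hJ
  have hdis : ∀ i j, π i < π j → π j + r j < π i + r i → r j = 0 := by
    intro i j h1 h2
    by_contra hc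
    obtain ⟨u, -, hu⟩ := aux_one h (π j) (h.2.1 j)
    have a1 := hu j ⟨le_rfl, by omega⟩
    have a2 := hu i ⟨h1.le, by omega⟩
    rw [a1, a2] at h1
    exact lt_irrefl _ h1
  have hD : ((I \ J) ∪ (J \ I)).card = (Finset.univ.filter fun t => ¬ 0 < r t).card := by
    have hmem : ∀ p, p ∈ ((I \ J) ∪ (J \ I)) ↔ p.1 < p.2 ∧
        ((π p.1 < π p.2 ∧ π p.2 + r p.2 < π p.1 + r p.1) ∨
         (π p.2 < π p.1 ∧ π p.1 + r p.1 < π p.2 + r p.2)) := by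
      intro p
      simp only [hI, hJ, Finset.mem_union, Finset.mem_sdiff, Finset.mem_filter,
        Finset.mem_univ, true_and]
      by_cases hp : p.1 < p.2
      · have n1 : π p.1 ≠ π p.2 := fun e => hp.ne (h.1 e)
        have n2 : π p.1 + r p.1 ≠ π p.2 + r p.2 := fun e => hp.ne (h.2.2.1 e)
        simp only [hp, true_and]
        omega
      · simp [hp]
    apply Finset.card_bij (fun p _ => if r p.1 = 0 then p.1 else p.2)
    · intro p hp
      rw [hmem] at hp
      simp only [Finset.mem_filter, Finset.mem_univ, true_and]
      split_ifs with h0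
      · omega
      · rcases hp.2 with hh | hh
        · have := hdis _ _ hh.1 hh.2
          omega
        · have := hdis _ _ hh.1 hh.2
          omega
    · intro p hp q hq hpq
      rw [hmem] at hp hq
      have uniq : ∀ i i' j, π i < π j → π j + r j < π i + r i → π i' < π j →
          π j + r j < π i' + r i' → i = i' := by
        intro i i' j a b c e
        obtain ⟨u, -, hu⟩ := aux_one h (π j) (h.2.1 j)
        rw [hu i ⟨a.le, by omega⟩, hu i' ⟨c.le, by omega⟩]
      obtain ⟨p1, p2⟩ := p
      obtain ⟨q1, q2⟩ := q
      simp only at hp hq hpq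
      obtain ⟨hp, hp'⟩ := hp
      obtain ⟨hq, hq'⟩ := hq
      split_ifs at hpq with h0 h1 h1
      · subst hpq
        rcases hp' with ⟨a, b⟩ | ⟨a, b⟩
        · omega
        rcases hq' with ⟨a', b'⟩ | ⟨a', b'⟩
        · omega
        rw [uniq _ _ _ a b a' b']
      · subst hpq
        rcases hp' with ⟨a, b⟩ | ⟨a, b⟩
        · omega
        rcases hq' with ⟨a', b'⟩ | ⟨a', b'⟩
        · have := uniq _ _ _ a b a' b'
          subst this
          exact absurd hp (lt_asymm hq)
        · omega
      · subst hpq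
        rcases hp' with ⟨a, b⟩ | ⟨a, b⟩
        · rcases hq' with ⟨a', b'⟩ | ⟨a', b'⟩
          · omega
          · have := uniq _ _ _ a b a' b'
            subst this
            exact absurd hp (lt_asymm hq)
        · have := hdis _ _ a b
          omega
      · subst hpq
        rcases hp' with ⟨a, b⟩ | ⟨a, b⟩
        · rcases hq' with ⟨a', b'⟩ | ⟨a', b'⟩
          · rw [uniq _ _ _ a b a' b']
          · have := hdis _ _ a' b'
            omega
        · have := hdis _ _ a b
          omega
    · intro j hj
      simp only [Finset.mem_filter, Finset.mem_univ, true_and] at hj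
      obtain ⟨i, ⟨hi1, hi2⟩, -⟩ := aux_one h (π j) (h.2.1 j)
      have hne : i ≠ j := by
        rintro rfl
        omega
      have hlt : π i < π j := lt_of_le_of_ne hi1 (fun e => hne (h.1 e))
      rcases lt_or_gt_of_ne hne with hl | hl
      · refine ⟨(i, j), (hmem _).2 ⟨hl, Or.inl ⟨hlt, ?_⟩⟩, ?_⟩
        · simp only
          omega
        · simp only
          rw [if_neg (by omega)]
      · refine ⟨(j, i), (hmem _).2 ⟨hl, Or.inr ⟨hlt, ?_⟩⟩, ?_⟩
        · simp only
          omega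
        · simp only
          rw [if_pos (by omega)]
  rw [Finset.card_union_of_disjoint (by
    rw [Finset.disjoint_left]
    intro x hx hx'
    exact (Finset.mem_sdiff.1 hx).2 (Finset.mem_sdiff.1 hx').1)] at hD
  have e1 := Finset.card_sdiff_add_card_inter I J
  have e2 := Finset.card_sdiff_add_card_inter J I
  rw [Finset.inter_comm] at e2
  have e3 := Finset.card_filter_add_card_filter_not (s := (Finset.univ : Finset (Fin d))) (fun t => 0 < r t)
  rw [Finset.card_univ, Fintype.card_fin] at e3
  rw [← pow_add]
  rw [neg_one_pow_eq_pow_mod_two, neg_one_pow_eq_pow_mod_two (_ + d)]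
  congr 1
  omega

open Classical in
/-- partial sums attached to an ordering of the support of `r` -/
noncomputable def gOrd {d : ℕ} (r : Fin d → ℕ) {k : ℕ} (a : {t // 0 < r t} ≃ Fin k)
    (t : {t // 0 < r t}) : ℕ := ∑ s : {t // 0 < r t}, if a s < a t then r s else 0

theorem gOrd_add {d : ℕ} (r : Fin d → ℕ) {k : ℕ} (a : {t // 0 < r t} ≃ Fin k)
    (t : {t // 0 < r t}) :
    gOrd r a t + r t = ∑ s : {t // 0 < r t}, if a s ≤ a t then r s else 0 := by
  classical
  have : r t = ∑ s : {t // 0 < r t}, if s = t then r s else 0 := by simp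
  unfold gOrd
  rw [this, ← Finset.sum_add_distrib]
  apply Finset.sum_congr rfl
  intro s _
  by_cases h : s = t
  · subst h; simp
  · have : a s ≠ a t := fun e => h (a.injective e)
    simp [h, lt_iff_le_and_ne, this]

theorem gOrd_lt {d : ℕ} (r : Fin d → ℕ) {k : ℕ} (a : {t // 0 < r t} ≃ Fin k)
    (s t : {t // 0 < r t}) (h : a s < a t) : gOrd r a s < gOrd r a t := by
  classical
  have h1 : gOrd r a s + r s ≤ gOrd r a t := by
    rw [gOrd_add]
    unfold gOrd
    apply Finset.sum_le_sum
    intro u _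
    by_cases hu : a u ≤ a s
    · simp [hu, lt_of_le_of_lt hu h]
    · simp [hu]
  have := s.2
  omega

theorem gOrd_lt_iff {d : ℕ} (r : Fin d → ℕ) {k : ℕ} (a : {t // 0 < r t} ≃ Fin k)
    (s t : {t // 0 < r t}) : gOrd r a s < gOrd r a t ↔ a s < a t := by
  refine ⟨fun h => ?_, gOrd_lt r a s t⟩
  by_contra hc
  rcases (not_lt.1 hc).lt_or_eq with h' | h'
  · have := gOrd_lt r a t s h'
    omega
  · rw [a.injective h'] at h
    exact lt_irrefl _ h

theorem gOrd_inj {d : ℕ} (r : Fin d → ℕ) {k : ℕ} (a : {t // 0 < r t} ≃ Fin k) :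
    Function.Injective (gOrd r a) := by
  intro s t h
  apply a.injective
  by_contra hc
  rcases lt_or_gt_of_ne hc with h' | h'
  · have := gOrd_lt r a _ _ h'
    omega
  · have := gOrd_lt r a _ _ h'
    omega

theorem gOrd_bound {d : ℕ} (r : Fin d → ℕ) (hr : ∑ i, r i = d) {k : ℕ}
    (a : {t // 0 < r t} ≃ Fin k) (t : {t // 0 < r t}) : gOrd r a t < d := by
  classical
  have h1 : gOrd r a t + r t ≤ d := by
    rw [gOrd_add]
    refine le_trans ?_ hr.le
    rw [← Fintype.sum_subtype_add_sum_subtype (fun t => 0 < r t) r]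
    refine le_trans ?_ (Nat.le_add_right _ _)
    apply Finset.sum_le_sum
    intro u _
    split_ifs <;> simp
  have := t.2
  omega

/-- complementary positions -/
noncomputable def gCompl {d : ℕ} (r : Fin d → ℕ) {k : ℕ} (a : {t // 0 < r t} ≃ Fin k) :
    Finset ℕ := Finset.range d \ Finset.univ.image (gOrd r a)

/-- parameter space -/
abbrev Par {d : ℕ} (r : Fin d → ℕ) (k : ℕ) : Type :=
  Σ a : ({t // 0 < r t} ≃ Fin k), ({t // ¬ 0 < r t} ≃
    {x // x ∈ gCompl r a})

open Classical in
/-- the bijection attached to a parameter -/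
noncomputable def toPi {d : ℕ} (r : Fin d → ℕ) (k : ℕ) (p : Par r k) : Fin d → ℕ :=
  fun t => if h : 0 < r t then gOrd r p.1 ⟨t, h⟩ else (p.2 ⟨t, h⟩ : ℕ)

theorem toPi_pos {d : ℕ} (r : Fin d → ℕ) (k : ℕ) (p : Par r k) (t : {t // 0 < r t}) :
    toPi r k p t = gOrd r p.1 t := by
  unfold toPi
  rw [dif_pos t.2]

theorem toPi_neg {d : ℕ} (r : Fin d → ℕ) (k : ℕ) (p : Par r k) (t : {t // ¬ 0 < r t}) :
    toPi r k p t = p.2 t := by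
  unfold toPi
  rw [dif_neg t.2]

theorem toPi_injective {d : ℕ} (r : Fin d → ℕ) (k : ℕ)
    (hk : Fintype.card {t // 0 < r t} = k) : Function.Injective (toPi r k) := by
  classical
  rintro ⟨a, b⟩ ⟨a', b'⟩ h
  have hg : ∀ t, gOrd r a t = gOrd r a' t := by
    intro t
    rw [← toPi_pos r k ⟨a, b⟩, ← toPi_pos r k ⟨a', b'⟩, h]
  have haa : a = a' := by
    ext t
    have c := aux_card k hk (fun s => (a s : ℕ)) (fun x y e => a.injective (Fin.ext e))
      (fun i => (a i).2) (a t) (a t).2.le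
    have c' := aux_card k hk (fun s => (a' s : ℕ)) (fun x y e => a'.injective (Fin.ext e))
      (fun i => (a' i).2) (a' t) (a' t).2.le
    rw [← c, ← c']
    congr 1
    ext s
    simp only [Finset.mem_filter, Finset.mem_univ, true_and, Fin.val_fin_lt]
    rw [← gOrd_lt_iff, ← gOrd_lt_iff, hg, hg]
  subst haa
  congr 1
  ext t
  rw [← toPi_neg r k ⟨a, b⟩, ← toPi_neg r k ⟨a, b'⟩, h]

theorem toPi_range {d : ℕ} (hd : 0 < d) (r : Fin d → ℕ) (hr : ∑ i, r i = d) (k : ℕ)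
    (hk : Fintype.card {t // 0 < r t} = k) :
    Set.range (toPi r k) = {π | IsGood d r π} := by
  classical
  ext π
  simp only [Set.mem_range, Set.mem_ofPred_eq]
  constructor
  · rintro ⟨p, rfl⟩
    have hmem := fun t => (p.2 t).2
    simp only [gCompl, Finset.mem_sdiff, Finset.mem_range, Finset.mem_image, Finset.mem_univ, true_and,
      not_exists] at hmem
    apply aux_conv hd hr
    · intro s t hst
      by_cases hs : 0 < r s <;> by_cases ht : 0 < r t
      · rw [toPi_pos r k p ⟨s, hs⟩, toPi_pos r k p ⟨t, ht⟩] at hst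
        exact congrArg Subtype.val (gOrd_inj r p.1 hst)
      · rw [toPi_pos r k p ⟨s, hs⟩, toPi_neg r k p ⟨t, ht⟩] at hst
        exact absurd hst ((hmem _).2 _)
      · rw [toPi_neg r k p ⟨s, hs⟩, toPi_pos r k p ⟨t, ht⟩] at hst
        exact absurd hst.symm ((hmem _).2 _)
      · rw [toPi_neg r k p ⟨s, hs⟩, toPi_neg r k p ⟨t, ht⟩] at hst
        exact congrArg Subtype.val (p.2.injective (Subtype.ext hst))
    · intro t
      by_cases ht : 0 < r t
      · rw [toPi_pos r k p ⟨t, ht⟩]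
        exact gOrd_bound r hr _ _
      · rw [toPi_neg r k p ⟨t, ht⟩]
        exact (hmem _).1
    · intro t ht
      rw [Finset.sum_filter, ← Fintype.sum_subtype_add_sum_subtype (fun t => 0 < r t)]
      rw [Finset.sum_eq_zero (s := (Finset.univ : Finset {t // ¬ 0 < r t})), add_zero]
      · rw [toPi_pos r k p ⟨t, ht⟩]
        conv_lhs => unfold gOrd
        apply Finset.sum_congr rfl
        intro s _
        rw [toPi_pos r k p s]
        simp only [gOrd_lt_iff]
      · intro s _
        have := s.2
        split_ifs <;> omega
  · intro h
    have hlt : ∀ t : {t // 0 < r t},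
        (Finset.univ.filter fun s : {t // 0 < r t} => π s < π t).card < k := by
      intro t
      rw [← hk, ← Finset.card_univ]
      apply Finset.card_lt_card
      refine ⟨Finset.subset_univ _, fun hh => ?_⟩
      have := hh (Finset.mem_univ t)
      simp at this
    let f : {t // 0 < r t} → Fin k := fun t => ⟨_, hlt t⟩
    have hf : ∀ s t : {t // 0 < r t}, π s < π t → f s < f t := by
      intro s t hst
      apply Fin.mk_lt_mk.2
      apply Finset.card_lt_card
      refine ⟨fun u => ?_, fun hh => ?_⟩
      · simp only [Finset.mem_filter, Finset.mem_univ, true_and]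
        omega
      · have := @hh s (by simpa using hst)
        simp at this
    have finj : Function.Injective f := by
      intro s t e
      apply Subtype.ext
      apply h.1
      by_contra hc
      rcases lt_or_gt_of_ne hc with h' | h'
      · exact (hf _ _ h').ne e
      · exact (hf _ _ h').ne e.symm
    have hf' : ∀ s t : {t // 0 < r t}, f s < f t ↔ π s < π t := by
      intro s t
      refine ⟨fun e => ?_, hf s t⟩
      by_contra hc
      rcases (not_lt.1 hc).lt_or_eq with h' | h'
      · exact lt_asymm e (hf _ _ h')
      · rw [Subtype.ext (h.1 h')] at e
        exact lt_irrefl _ e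
    have fbij : Function.Bijective f :=
      (Fintype.bijective_iff_injective_and_card f).2 ⟨finj, by simp [hk]⟩
    let a := Equiv.ofBijective f fbij
    have ha : ∀ t, gOrd r a t = π t := by
      intro t
      rw [aux_good_sum h t t.2, Finset.sum_filter,
        ← Fintype.sum_subtype_add_sum_subtype (fun t => 0 < r t)]
      rw [Finset.sum_eq_zero (s := (Finset.univ : Finset {t // ¬ 0 < r t})), add_zero]
      · unfold gOrd
        apply Finset.sum_congr rfl
        intro s _
        have : a s < a t ↔ π s < π t := hf' s t
        simp only [this]
      · intro s _
        have := s.2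
        split_ifs <;> omega
    have hmem : ∀ t : {t // ¬ 0 < r t},
        π t ∈ gCompl r a := by
      intro t
      simp only [gCompl, Finset.mem_sdiff, Finset.mem_range, Finset.mem_image, Finset.mem_univ, true_and,
        not_exists]
      refine ⟨h.2.1 t, fun s hs => ?_⟩
      rw [ha] at hs
      have := h.1 hs
      have h1 := s.2
      rw [this] at h1
      exact t.2 h1
    let b : {t // ¬ 0 < r t} → {x // x ∈ gCompl r a} :=
      fun t => ⟨π t, hmem t⟩
    have bbij : Function.Bijective b := by
      refine ⟨fun s t e => Subtype.ext (h.1 (congrArg Subtype.val e)), ?_⟩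
      rintro ⟨x, hx⟩
      simp only [gCompl, Finset.mem_sdiff, Finset.mem_range, Finset.mem_image, Finset.mem_univ, true_and,
        not_exists] at hx
      have himg : (Finset.univ : Finset (Fin d)).image π = Finset.range d := by
        apply Finset.eq_of_subset_of_card_le
        · intro z hz
          obtain ⟨i, -, rfl⟩ := Finset.mem_image.1 hz
          exact Finset.mem_range.2 (h.2.1 i)
        · rw [Finset.card_image_of_injective _ h.1]
          simp
      have hx' := Finset.mem_range.2 hx.1
      rw [← himg] at hx'
      obtain ⟨i, -, hi⟩ := Finset.mem_image.1 hx'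
      refine ⟨⟨i, fun hpos => hx.2 ⟨i, hpos⟩ (by rw [ha]; exact hi)⟩, Subtype.ext hi⟩
    refine ⟨⟨a, Equiv.ofBijective b bbij⟩, ?_⟩
    funext t
    by_cases ht : 0 < r t
    · rw [toPi_pos r k _ ⟨t, ht⟩]
      exact ha ⟨t, ht⟩
    · rw [toPi_neg r k _ ⟨t, ht⟩]
      rfl

theorem aux_count {d : ℕ} (hd : 0 < d) (r : Fin d → ℕ) (hr : ∑ i, r i = d) (k : ℕ)
    (hk : Fintype.card {t // 0 < r t} = k) :
    {π | IsGood d r π}.ncard = Nat.factorial k * Nat.factorial (d - k) := by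
  classical
  rw [← toPi_range hd r hr k hk, ← Nat.card_coe_set_eq,
    Nat.card_range_of_injective (toPi_injective r k hk), Nat.card_eq_fintype_card,
    Fintype.card_sigma]
  have hc : Fintype.card {t // ¬ 0 < r t} = d - k := by
    rw [Fintype.card_subtype_compl, hk, Fintype.card_fin]
  have : ∀ a : ({t // 0 < r t} ≃ Fin k), Fintype.card ({t // ¬ 0 < r t} ≃
    {x // x ∈ gCompl r a}) = Nat.factorial (d - k) := by
    intro a
    have e : Fintype.card {t // ¬ 0 < r t} = Fintype.card
        {x // x ∈ gCompl r a} := by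
      rw [hc, Fintype.card_coe, gCompl, Finset.card_sdiff_of_subset, Finset.card_range,
        Finset.card_image_of_injective _ (gOrd_inj r a), Finset.card_univ, hk]
      intro x hx
      obtain ⟨t, -, rfl⟩ := Finset.mem_image.1 hx
      exact Finset.mem_range.2 (gOrd_bound r hr a t)
    rw [Fintype.card_equiv (Fintype.equivOfCardEq e), hc]
  rw [Finset.sum_congr rfl (fun a _ => this a), Finset.sum_const, Finset.card_univ,
    Fintype.card_equiv (Fintype.equivFinOfCardEq hk), hk, smul_eq_mul]

/-- Elements of `S_d^0`: bijections from `{1,…,d}` (indexed by `Fin d`) onto `{0,…,d-1}`;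
`π + r ∈ S_d` means `fun i => π i + r i` is a bijection onto `{1,…,d}`. -/
theorem stmt16 (d : ℕ) (hd : 0 < d) (r : Fin d → ℕ) (hr : ∑ i, r i = d) :
    {π : Fin d → ℕ | Function.Injective π ∧ (∀ i, π i < d) ∧
        Function.Injective (fun i => π i + r i) ∧
        (∀ i, 1 ≤ π i + r i ∧ π i + r i ≤ d)}.ncard =
      Nat.factorial (Finset.univ.filter fun t => 0 < r t).card *
        Nat.factorial (d - (Finset.univ.filter fun t => 0 < r t).card) ∧
    ∀ π : Fin d → ℕ, Function.Injective π → (∀ i, π i < d) →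
      Function.Injective (fun i => π i + r i) →
      (∀ i, 1 ≤ π i + r i ∧ π i + r i ≤ d) →
      bijSign d π * bijSign d (fun i => π i + r i) =
        (-1) ^ ((Finset.univ.filter fun t => 0 < r t).card + d) := by
  refine ⟨?_, fun π h1 h2 h3 h4 => aux_sign ⟨h1, h2, h3, h4⟩⟩
  exact aux_count hd r hr _ (Fintype.card_subtype _)
end

section
/- Let d ≥ 2 be an integer such that d+1 is prime. Let G be a finite d-degenerate graph with vertex set {v_1, v_2, …, v_n}. Let r : {1,…,n} → Z≥0 satisfy Σ_{i=1}^n r(i) = d. Let L be a list assignment for G such that |L(v_i)| ≥ d + 1 − r(i) for 1 ≤ i ≤ n. Then G is L-colorable. -/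
def IsLColoring {V : Type*} (G : SimpleGraph V) (L : V → Finset ℕ) (φ : V → ℕ) : Prop :=
  (∀ v, φ v ∈ L v) ∧ ∀ ⦃u w : V⦄, G.Adj u w → φ u ≠ φ w

/-- `G` is `d`-degenerate: every subgraph of `G` (with at least one vertex)
has a vertex of degree at most `d`. -/
def Degenerate {V : Type*} (G : SimpleGraph V) (d : ℕ) : Prop :=
  ∀ H : G.Subgraph, H.verts.Nonempty → ∃ v ∈ H.verts, (H.neighborSet v).ncard ≤ d

lemma aux_pow_zero (d : ℕ) [Fact (Nat.Prime (d + 1))] (k : ℕ) (hk : k < d) :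
    ∑ x : ZMod (d + 1), x ^ k = 0 := by
  apply FiniteField.sum_pow_lt_card_sub_one
  simpa [ZMod.card] using hk

lemma aux_pow_d (d : ℕ) [Fact (Nat.Prime (d + 1))] (hd : 2 ≤ d) :
    ∑ x : ZMod (d + 1), x ^ d = -1 := by
  have h1 : ∀ x : ZMod (d + 1), x ^ d = if x = 0 then 0 else 1 := by
    intro x
    split_ifs with h
    · rw [h, zero_pow (by omega)]
    · have := ZMod.pow_card_sub_one_eq_one h
      simpa using this
  have h2 : ∀ x : ZMod (d + 1), x ^ d = 1 - (if x = 0 then 1 else 0) := by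
    intro x
    rw [h1 x]
    split_ifs <;> simp
  simp_rw [h2]
  rw [Finset.sum_sub_distrib]
  rw [Finset.sum_const, Finset.card_univ, ZMod.card, Finset.sum_ite_eq' Finset.univ]
  have h3 := ZMod.natCast_self (d + 1)
  rw [nsmul_eq_mul, h3]
  simp

lemma aux_monic (d : ℕ) [Fact (Nat.Prime (d + 1))] (hd : 2 ≤ d)
    (f : Polynomial (ZMod (d + 1))) (hm : f.Monic) (hn : f.natDegree = d) :
    ∑ t : ZMod (d + 1), f.eval t = -1 := by
  simp_rw [Polynomial.eval_eq_sum_range]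
  rw [Finset.sum_comm, hn, Finset.sum_range_succ]
  simp_rw [← Finset.mul_sum]
  rw [aux_pow_d d hd, Finset.sum_eq_zero]
  · have : f.coeff d = 1 := by
      have h := hm.coeff_natDegree
      rwa [hn] at h
    rw [this]; simp
  · intro k hk
    rw [aux_pow_zero d k (Finset.mem_range.1 hk), mul_zero]

lemma aux_prod {K : Type*} [Field K] [Fintype K] : ∀ (m : ℕ) (g : Fin m → (Fin m → K) → K),
    (∀ i y y', (∀ j ≤ i, y j = y' j) → g i y = g i y') →
    (∀ i y, ∑ t, g i (Function.update y i t) = -1) →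
    ∑ y, ∏ i, g i y = (-1) ^ m := by
  intro m
  induction m with
  | zero => intro g _ _; simp
  | succ m ih =>
    intro g h1 h2
    rw [← (Fin.snocEquiv (fun _ => K)).sum_comp, Fintype.sum_prod_type_right]
    have key := ih (fun i y => g i.castSucc (Fin.snoc (α := fun _ => K) y 0)) ?_ ?_
    · rw [pow_succ, ← key, Finset.sum_mul]
      apply Finset.sum_congr rfl
      intro y _
      rw [← h2 (Fin.last m) (Fin.snoc (α := fun _ => K) y 0), Finset.mul_sum]
      apply Finset.sum_congr rfl
      intro t _
      rw [Fin.prod_univ_castSucc]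
      congr 1
      · apply Finset.prod_congr rfl
        intro i _
        apply h1
        intro j hj
        have : ∃ j' : Fin m, j = j'.castSucc :=
          ⟨⟨j, lt_of_le_of_lt (Fin.le_def.1 hj) i.2⟩, rfl⟩
        obtain ⟨j', rfl⟩ := this
        simp [Fin.snocEquiv]
      · congr 1
        rw [Fin.update_snoc_last]
        rfl
    · intro i y y' h
      apply h1
      intro j hj
      have : ∃ j' : Fin m, j = j'.castSucc :=
        ⟨⟨j, lt_of_le_of_lt (Fin.le_def.1 hj) i.2⟩, rfl⟩
      obtain ⟨j', rfl⟩ := this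
      simpa using h j' (by simpa using hj)
    · intro i y
      rw [← h2 i.castSucc (Fin.snoc (α := fun _ => K) y 0)]
      apply Finset.sum_congr rfl
      intro t _
      simp only [Fin.snoc_update]

lemma aux_total (d m : ℕ) [Fact (Nat.Prime (d + 1))] (hd : 2 ≤ d)
    (c : Fin m → Fin d → Fin (m + 1)) (hc : ∀ i k, c i k < i.succ)
    (r : Fin (m + 1) → ℕ) (hr : ∑ i, r i = d) :
    ∑ x : Fin (m + 1) → ZMod (d + 1),
      (∏ i, ∏ k, (x i.succ - x (c i k))) * ∏ i, x i ^ r i ≠ 0 := by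
  let P : (Fin (m + 1) → ZMod (d + 1)) → ZMod (d + 1) :=
    fun x => ∏ i, ∏ k, (x i.succ - x (c i k))
  have hP : ∀ x t, P (fun i => x i + t) = P x := by
    intro x t
    simp [P]
  have hM : ∀ x : Fin (m + 1) → ZMod (d + 1), ∑ t, ∏ i, (x i + t) ^ r i = -1 := by
    intro x
    have hmon : ∀ i ∈ Finset.univ, ((Polynomial.X + Polynomial.C (x i)) ^ r i).Monic :=
      fun i _ => (Polynomial.monic_X_add_C _).pow _
    have := aux_monic d hd (∏ i, (Polynomial.X + Polynomial.C (x i)) ^ r i)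
      (Polynomial.monic_prod_of_monic _ _ hmon) (by
        rw [Polynomial.natDegree_prod_of_monic _ _ hmon]
        simpa [Polynomial.natDegree_pow, Polynomial.natDegree_X_add_C] using hr)
    rw [← this]
    apply Finset.sum_congr rfl
    intro t _
    simp [Polynomial.eval_prod, add_comm]
  have hQ : ∑ y : Fin m → ZMod (d + 1), P (Fin.cons (α := fun _ => ZMod (d + 1)) 0 y)
      = (-1) ^ m := by
    apply aux_prod m (fun i y => ∏ k, (y i -
      (Fin.cons (α := fun _ => ZMod (d + 1)) 0 y : Fin (m + 1) → _) (c i k)))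
    · intro i y y' h
      apply Finset.prod_congr rfl
      intro k _
      have hk := hc i k
      rw [h i le_rfl]
      congr 1
      generalize c i k = j at hk
      induction j using Fin.cases with
      | zero => rfl
      | succ j => simpa using h j (Fin.succ_lt_succ_iff.1 hk).le
    · intro i y
      have hmon : ∀ k ∈ (Finset.univ : Finset (Fin d)), (Polynomial.X - Polynomial.C
        ((Fin.cons (α := fun _ => ZMod (d + 1)) 0 y : Fin (m + 1) → _) (c i k))).Monic :=
        fun k _ => Polynomial.monic_X_sub_C _
      have := aux_monic d hd _ (Polynomial.monic_prod_of_monic _ _ hmon) (by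
        rw [Polynomial.natDegree_prod_of_monic _ _ hmon]
        simp)
      rw [← this]
      apply Finset.sum_congr rfl
      intro t _
      rw [Polynomial.eval_prod]
      apply Finset.prod_congr rfl
      intro k _
      have hk := hc i k
      simp only [Function.update_self, Polynomial.eval_sub, Polynomial.eval_X, Polynomial.eval_C]
      congr 1
      generalize c i k = j at hk
      induction j using Fin.cases with
      | zero => rfl
      | succ j =>
        have : j ≠ i := (Fin.succ_lt_succ_iff.1 hk).ne
        simp [this]
  have : ∑ x : Fin (m + 1) → ZMod (d + 1), P x * ∏ i, x i ^ r i = (-1) ^ m * (-1) := by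
    rw [← (Fin.consEquiv (fun _ => ZMod (d + 1))).sum_comp, Fintype.sum_prod_type, ← hQ,
      Finset.sum_mul]
    have e1 : ∀ t : ZMod (d + 1), ∑ y : Fin m → ZMod (d + 1),
        P (Fin.consEquiv (fun _ => ZMod (d + 1)) (t, y)) *
          ∏ i, (Fin.consEquiv (fun _ => ZMod (d + 1)) (t, y)) i ^ r i =
        ∑ y : Fin m → ZMod (d + 1), P (Fin.cons (α := fun _ => ZMod (d + 1)) 0 y) *
          ∏ i, ((Fin.cons (α := fun _ => ZMod (d + 1)) 0 y : Fin (m + 1) → _) i + t) ^ r i := by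
      intro t
      rw [← Equiv.sum_comp (Equiv.addRight (fun _ : Fin m => t))]
      apply Finset.sum_congr rfl
      intro y _
      rw [← hP (Fin.cons (α := fun _ => ZMod (d + 1)) 0 y) t]
      have : Fin.consEquiv (fun _ => ZMod (d + 1)) (t, (Equiv.addRight (fun _ : Fin m => t)) y)
        = fun i => (Fin.cons (α := fun _ => ZMod (d + 1)) 0 y : Fin (m + 1) → _) i + t := by
        funext i
        induction i using Fin.cases <;> simp [Fin.consEquiv]
      rw [this]
    simp_rw [e1]
    rw [Finset.sum_comm]
    apply Finset.sum_congr rfl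
    intro y _
    rw [← Finset.mul_sum, hM]
  show ∑ x : Fin (m + 1) → ZMod (d + 1), P x * ∏ i, x i ^ r i ≠ 0
  rw [this]
  simp

lemma aux_coeff (d n : ℕ) [Fact (Nat.Prime (d + 1))]
    (F : MvPolynomial (Fin n) (ZMod (d + 1))) (hF : F.IsHomogeneous (n * d))
    (h : ∑ x, MvPolynomial.eval x F ≠ 0) (t : Fin n →₀ ℕ) (ht : ∀ i, t i = d) :
    F.coeff t ≠ 0 := by
  intro h0
  apply h
  simp_rw [MvPolynomial.eval_eq']
  rw [Finset.sum_comm]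
  apply Finset.sum_eq_zero
  intro s hs
  have hs' := MvPolynomial.mem_support_iff.1 hs
  have hdeg : ∑ i, s i = n * d := by
    have := hF hs'
    rw [← this, Finsupp.weight_apply, Finsupp.sum_fintype] <;> simp
  have : ∃ i, s i < d := by
    by_contra hcon
    push Not at hcon
    have hall : ∀ i ∈ Finset.univ, d = s i := by
      apply (Finset.sum_eq_sum_iff_of_le (fun i _ => hcon i)).1
      simp [hdeg]
    apply hs'
    have : s = t := by
      ext i
      rw [ht, ← hall i (Finset.mem_univ _)]
    rw [this, h0]
  obtain ⟨i, hi⟩ := this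
  rw [← Finset.mul_sum, ← Fintype.prod_sum (fun i a => a ^ s i),
    Finset.prod_eq_zero (Finset.mem_univ i) (aux_pow_zero d _ hi), mul_zero]

lemma aux_main (d m : ℕ) (hp : Nat.Prime (d + 1)) (hd : 2 ≤ d)
    (c : Fin m → Fin d → Fin (m + 1)) (hc : ∀ i k, c i k < i.succ)
    (r : Fin (m + 1) → ℕ) (hr : ∑ i, r i = d)
    (L : Fin (m + 1) → Finset ℕ) (hL : ∀ i, d + 1 - r i ≤ (L i).card) :
    ∃ ψ : Fin (m + 1) → ℕ, (∀ i, ψ i ∈ L i) ∧ ∀ i k, ψ i.succ ≠ ψ (c i k) := by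
  have : Fact (Nat.Prime (d + 1)) := ⟨hp⟩
  have hrd : ∀ i, r i ≤ d := fun i => by
    rw [← hr]; exact Finset.single_le_sum (fun _ _ => Nat.zero_le _) (Finset.mem_univ i)
  let P (R : Type) [CommRing R] : MvPolynomial (Fin (m + 1)) R :=
    ∏ i, ∏ k, (MvPolynomial.X (Fin.succ i) - MvPolynomial.X (c i k))
  have hhom : ∀ (R : Type) [CommRing R], (P R).IsHomogeneous (m * d) := by
    intro R _
    have := MvPolynomial.IsHomogeneous.prod (R := R) (Finset.univ : Finset (Fin m))
      (fun i => ∏ k, (MvPolynomial.X (Fin.succ i) - MvPolynomial.X (c i k)))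
      (fun _ => ∑ k : Fin d, 1) (fun i _ => MvPolynomial.IsHomogeneous.prod _ _ _
        (fun k _ => (MvPolynomial.isHomogeneous_X _ _).sub (MvPolynomial.isHomogeneous_X _ _)))
    simpa using this
  let t : Fin (m + 1) →₀ ℕ := Finsupp.equivFunOnFinite.symm (fun i => d - r i)
  let ρ : Fin (m + 1) →₀ ℕ := Finsupp.equivFunOnFinite.symm r
  have hρ : ∑ i, ρ i = d := hr
  have htρ : ∀ i, (t + ρ) i = d := fun i => by
    have := hrd i
    simp [t, ρ]; omega
  have hmono : (MvPolynomial.monomial ρ (1 : ZMod (d + 1))).IsHomogeneous d :=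
    MvPolynomial.isHomogeneous_monomial _ (by
      rw [Finsupp.degree_eq_sum]; exact hρ)
  have hc1 : (P (ZMod (d + 1))).coeff t ≠ 0 := by
    have := aux_coeff d (m + 1) (P (ZMod (d + 1)) * MvPolynomial.monomial ρ 1)
      (by
        have := (hhom (ZMod (d + 1))).mul hmono
        rwa [← Nat.succ_mul] at this) (by
        convert aux_total d m hd c hc r hr using 2
        simp [P, MvPolynomial.eval_monomial, Finsupp.prod_fintype, ρ]) (t + ρ) htρ
    rwa [MvPolynomial.coeff_mul_monomial, mul_one] at this
  have hc2 : (P ℤ).coeff t ≠ 0 := by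
    intro h0
    apply hc1
    have : P (ZMod (d + 1)) = MvPolynomial.map (Int.castRingHom _) (P ℤ) := by
      simp [P]
    rw [this, MvPolynomial.coeff_map, h0, map_zero]
  have hdeg : t.degree = m * d := by
    have h1 : ∑ i, (t + ρ) i = (m + 1) * d := by simp_rw [htρ]; simp
    simp only [Finsupp.add_apply] at h1
    rw [Finset.sum_add_distrib, hρ, Nat.succ_mul] at h1
    rw [Finsupp.degree_eq_sum]; omega
  obtain ⟨s, hs, hs'⟩ := MvPolynomial.combinatorial_nullstellensatz_exists_eval_nonzero (P ℤ) t hc2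
    (by rw [hdeg]; exact (hhom ℤ).totalDegree (fun h => hc2 (by rw [h]; simp)))
    (fun i => (L i).map Nat.castEmbedding) (fun i => by
      have := hL i
      have := hrd i
      simp [t]; omega)
  simp only [Finset.mem_map, Nat.castEmbedding_apply] at hs
  choose ψ h1 h2 using hs
  refine ⟨ψ, h1, fun i k h => hs' ?_⟩
  simp only [P, map_prod, map_sub, MvPolynomial.eval_X]
  apply Finset.prod_eq_zero (Finset.mem_univ i)
  apply Finset.prod_eq_zero (Finset.mem_univ k)
  rw [← h2, ← h2, h, sub_self]

lemma aux_order {V : Type*} [DecidableEq V] (G : SimpleGraph V) (d : ℕ) (hdeg : Degenerate G d) :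
    ∀ (k : ℕ) (S : Finset V), S.card = k → ∃ e : Fin k → V, Function.Injective e ∧
      (∀ i, e i ∈ S) ∧ ∀ i, {j | j < i ∧ G.Adj (e i) (e j)}.ncard ≤ d := by
  intro k
  induction k with
  | zero => intro S _; exact ⟨Fin.elim0, fun i => i.elim0, fun i => i.elim0, fun i => i.elim0⟩
  | succ k ih =>
    intro S hS
    have hne : S.Nonempty := Finset.card_pos.1 (by omega)
    obtain ⟨v, hv, hvd⟩ := hdeg ((⊤ : G.Subgraph).induce (S : Set V)) (by simpa using hne)
    have hv : v ∈ S := by simpa using hv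
    obtain ⟨e, he1, he2, he3⟩ := ih (S.erase v) (by rw [Finset.card_erase_of_mem hv]; omega)
    refine ⟨Fin.snoc (α := fun _ => V) e v, ?_, ?_, ?_⟩
    · rw [Fin.snoc_injective_iff]
      refine ⟨he1, ?_⟩
      rintro ⟨i, hi⟩
      have := he2 i
      simp [hi] at this
    · intro i
      induction i using Fin.lastCases with
      | last => simpa using hv
      | cast i => simpa using Finset.mem_of_mem_erase (he2 i)
    · intro i
      induction i using Fin.lastCases with
      | last =>
        refine le_trans ?_ hvd
        refine Set.ncard_le_ncard_of_injOn (Fin.snoc (α := fun _ => V) e v) ?_ ?_ ?_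
        · rintro j ⟨hj, hj'⟩
          induction j using Fin.lastCases with
          | last => simp at hj
          | cast j =>
            have := Finset.mem_of_mem_erase (he2 j)
            simp at hj'
            simp [SimpleGraph.Subgraph.neighborSet, hv, this, hj']
        · intro a _ b _ hab
          have : Function.Injective (Fin.snoc (α := fun _ => V) e v : Fin (k + 1) → V) := by
            rw [Fin.snoc_injective_iff]
            refine ⟨he1, ?_⟩
            rintro ⟨i, hi⟩
            have := he2 i
            simp [hi] at this
          exact this hab
        · apply Set.Finite.subset (S.finite_toSet)
          intro w hw
          exact hw.2.1
      | cast i =>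
        refine le_trans ?_ (he3 i)
        have : {j : Fin (k + 1) | j < i.castSucc ∧ G.Adj (Fin.snoc (α := fun _ => V) e v i.castSucc)
          (Fin.snoc (α := fun _ => V) e v j)} ⊆ Fin.castSucc '' {j | j < i ∧ G.Adj (e i) (e j)} := by
          rintro j ⟨hj, hj'⟩
          induction j using Fin.lastCases with
          | last => exact absurd hj (not_lt.2 (Fin.le_last _))
          | cast j =>
            refine ⟨j, ⟨by simpa using hj, by simpa using hj'⟩, rfl⟩
        exact (Set.ncard_le_ncard this (Set.toFinite _)).trans (Set.ncard_image_le (Set.toFinite _))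

theorem stmt17 (d n : ℕ) (hd : 2 ≤ d) (hp : Nat.Prime (d + 1))
    (G : SimpleGraph (Fin n)) (hdeg : Degenerate G d)
    (r : Fin n → ℕ) (hr : ∑ i, r i = d)
    (L : Fin n → Finset ℕ) (hL : ∀ i, d + 1 - r i ≤ (L i).card) :
    ∃ φ : Fin n → ℕ, IsLColoring G L φ := by
  classical
  obtain _ | m := n
  · simp at hr; omega
  obtain ⟨e, he, -, hed⟩ := aux_order G d hdeg (m + 1) Finset.univ (by simp)
  let E : Fin (m + 1) ≃ Fin (m + 1) := Equiv.ofBijective e (Finite.injective_iff_bijective.1 he)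
  have hcov : ∀ i : Fin m, ∃ c : Fin d → Fin (m + 1), (∀ k, c k < i.succ) ∧
      ∀ j < i.succ, G.Adj (e i.succ) (e j) → ∃ k, c k = j := by
    intro i
    let A : Finset (Fin (m + 1)) := Finset.univ.filter (fun j => j < i.succ ∧ G.Adj (e i.succ) (e j))
    have hA : A.card ≤ d := by
      have := hed i.succ
      rw [Set.ncard_eq_toFinset_card'] at this
      convert this using 2
      ext; simp [A]
    refine ⟨fun k => if h : k.1 < A.card then (A.equivFin.symm ⟨k, h⟩).1 else 0, ?_, ?_⟩
    · intro k
      dsimp only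
      split_ifs with h
      · have := (A.equivFin.symm ⟨k, h⟩).2
        simp only [A, Finset.mem_filter] at this
        exact this.2.1
      · exact Fin.succ_pos i
    · intro j hj hadj
      have hjA : j ∈ A := by simp [A, hj, hadj]
      let q := A.equivFin ⟨j, hjA⟩
      refine ⟨⟨q, lt_of_lt_of_le q.2 hA⟩, ?_⟩
      simp [q]
  choose c hc1 hc2 using hcov
  obtain ⟨ψ, h1, h2⟩ := aux_main d m hp hd c hc1 (fun i => r (E i))
    (by rw [← hr]; exact E.sum_comp r) (fun i => L (E i)) (fun i => hL (E i))
  have key : ∀ a b : Fin (m + 1), b < a → G.Adj (e a) (e b) → ψ a ≠ ψ b := by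
    intro a b hab hadj
    induction a using Fin.cases with
    | zero => exact absurd hab (Fin.not_lt_zero b)
    | succ a =>
      obtain ⟨k, rfl⟩ := hc2 a b hab hadj
      exact h2 a k
  refine ⟨fun v => ψ (E.symm v), fun v => by simpa using h1 (E.symm v), ?_⟩
  intro u w huw
  obtain ⟨a, rfl⟩ := E.surjective u
  obtain ⟨b, rfl⟩ := E.surjective w
  simp only [Equiv.symm_apply_apply]
  rcases lt_trichotomy a b with h | h | h
  · exact (key b a h huw.symm).symm
  · subst h; exact absurd huw (G.loopless.irrefl _)
  · exact key a b h huw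
end

section
/- Let d ≥ 2 be an integer such that d+1 is prime. Let G be a finite graph on vertices v_1, …, v_n with n ≥ d, such that {v_1,…,v_d} is a clique in G and for every i > d the vertex v_i has exactly d neighbors among {v_j : j < i}, and all edges of G are of this form. Let p_G = Π_{v_i v_j ∈ E(G), i < j} (x_j − x_i) be the graph polynomial of G viewed as a polynomial over the integers in variables x_1,…,x_n. Let r : {1,…,n} → Z≥0 satisfy Σ_{i=1}^n r(i) = d. For a permutation σ of {1,…,d}, let c_G(h,σ) be the coefficient in p_G of the monomial Π_{i=1}^d x_i^{σ(i)−r(i)} · Π_{i=d+1}^n x_i^{d−r(i)} (interpreted as 0 if any exponent is negative). Then Σ_{σ ∈ S_d} sgn(σ)·c_G(h,σ) ≡ −1 (mod d+1). -/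
section
variable {d : ℕ} [Fact (Nat.Prime (d+1))]

lemma hpowlt {k : ℕ} (hk : k < d) : ∑ a : ZMod (d+1), a ^ k = 0 := by
  have := FiniteField.sum_pow_lt_card_sub_one (ZMod (d+1)) k (by simpa [ZMod.card] using hk)
  exact this

lemma hpowd (hd : 0 < d) : ∑ a : ZMod (d+1), a ^ d = -1 := by
  have h1 : ∀ a : ZMod (d+1), a ^ d = 1 - (if a = 0 then 1 else 0) := by
    intro a
    by_cases h : a = 0
    · simp [h, hd.ne']
    · have := ZMod.pow_card_sub_one_eq_one (p := d+1) h
      simp only [Nat.add_sub_cancel] at this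
      simp [h, this]
  simp only [h1, Finset.sum_sub_distrib]
  simp

lemma hpow2 {k : ℕ} (h0 : k ≠ d) (h2 : k < 2 * d) : ∑ a : ZMod (d+1), a ^ k = 0 := by
  rcases lt_or_ge k d with h | h
  · exact hpowlt h
  · obtain ⟨e, rfl⟩ := Nat.exists_eq_add_of_le h
    have he : e ≠ 0 := by omega
    have : ∀ a : ZMod (d+1), a ^ (d+e) = a ^ e := by
      intro a
      by_cases h : a = 0
      · simp [h, he]
      · have := ZMod.pow_card_sub_one_eq_one (p := d+1) h
        simp only [Nat.add_sub_cancel] at this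
        simp [pow_add, this]
    simp only [this]
    exact hpowlt (by omega)

lemma monic_sum (hd : 0 < d) (q : Polynomial (ZMod (d+1))) (hq : q.Monic) (hdeg : q.natDegree = d) :
    ∑ a : ZMod (d+1), q.eval a = -1 := by
  simp only [Polynomial.eval_eq_sum_range, hdeg]
  rw [Finset.sum_comm, Finset.sum_range_succ, Finset.sum_eq_zero]
  · rw [← Finset.mul_sum, hpowd hd]
    have : q.coeff d = 1 := by have h := hq.coeff_natDegree; rwa [hdeg] at h
    simp [this]
  · intro k hk
    rw [← Finset.mul_sum, hpowlt (Finset.mem_range.1 hk), mul_zero]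

variable {ι : Type*} [Fintype ι] [DecidableEq ι]

lemma shift_sum (i0 : ι) (h : (ι → ZMod (d+1)) → ZMod (d+1)) :
    ∑ x, h x = ∑ z ∈ Finset.univ.filter (fun z : ι → ZMod (d+1) => z i0 = 0),
      ∑ a, h (fun i => z i + a) := by
  rw [Finset.sum_comm, ← Finset.sum_fiberwise (s := Finset.univ) (g := fun x : ι → ZMod (d+1) => x i0)]
  refine Finset.sum_congr rfl fun a _ => ?_
  refine Finset.sum_nbij' (fun x i => x i - a) (fun z i => z i + a) ?_ ?_ ?_ ?_ ?_
  · intro x hx; simp at hx ⊢; simp [hx]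
  · intro x hx; simp at hx ⊢; simp [hx]
  · intro x hx; simp
  · intro x hx; simp
  · intro x hx; simp

lemma transl_r (hd : 0 < d) (i0 : ι) (f : (ι → ZMod (d+1)) → ZMod (d+1))
    (hf : ∀ x a, f (fun i => x i + a) = f x) (r : ι → ℕ) (hr : ∑ i, r i = d) :
    ∑ x, (∏ i, x i ^ r i) * f x =
      - ∑ z ∈ Finset.univ.filter (fun z : ι → ZMod (d+1) => z i0 = 0), f z := by
  rw [shift_sum i0, ← Finset.sum_neg_distrib]
  refine Finset.sum_congr rfl fun z _ => ?_
  simp only [hf]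
  rw [← Finset.sum_mul]
  have hm : ∀ i ∈ Finset.univ, ((Polynomial.X + Polynomial.C (z i)) ^ r i).Monic :=
    fun i _ => (Polynomial.monic_X_add_C _).pow _
  have := monic_sum hd (∏ i, (Polynomial.X + Polynomial.C (z i)) ^ r i)
    (Polynomial.monic_prod_of_monic _ _ hm) (by
      rw [Polynomial.natDegree_prod_of_monic _ _ hm]
      simp [Polynomial.natDegree_pow, hr])
  simp only [Polynomial.eval_prod, Polynomial.eval_pow, Polynomial.eval_add, Polynomial.eval_X,
    Polynomial.eval_C] at this
  simp only [add_comm (z _)]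
  rw [this]; simp

lemma transl_0 (i0 : ι) (f : (ι → ZMod (d+1)) → ZMod (d+1))
    (hf : ∀ x a, f (fun i => x i + a) = f x) : ∑ x, f x = 0 := by
  rw [shift_sum i0]
  refine Finset.sum_eq_zero fun z _ => ?_
  simp only [hf]
  simp

lemma step (hd : 0 < d) (he : Even d) {k : ℕ} (f : (Fin k → ZMod (d+1)) → ZMod (d+1))
    (hf : ∀ x a, f (fun i => x i + a) = f x) (c : ZMod (d+1))
    (hc : ∀ r : Fin k → ℕ, ∑ i, r i = d → ∑ x, (∏ i, x i ^ r i) * f x = c)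
    (N : Finset (Fin k)) (hN : N.card = d)
    (g : (Fin (k+1) → ZMod (d+1)) → ZMod (d+1))
    (hg : ∀ x, g x = f (fun i => x i.castSucc) * ∏ j ∈ N, (x (Fin.last k) - x j.castSucc))
    (r : Fin (k+1) → ℕ) (hr : ∑ i, r i = d) :
    ∑ x, (∏ i, x i ^ r i) * g x = - c := by
  have hgt : ∀ x a, g (fun i => x i + a) = g x := by
    intro x a
    rw [hg, hg]
    simp only [add_sub_add_right_eq_sub]
    rw [hf (fun i => x i.castSucc)]
  rw [transl_r hd (Fin.last k) g hgt r hr,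
    ← transl_r hd (Fin.last k) g hgt (fun i => if i = Fin.last k then d else 0) (by simp)]
  have h1 : ∀ x : Fin (k+1) → ZMod (d+1),
      (∏ i, x i ^ (if i = Fin.last k then d else 0)) * g x
       = g x - (if x (Fin.last k) = 0 then g x else 0) := by
    intro x
    rw [Finset.prod_eq_single (Fin.last k) (by intro b _ hb; simp [hb]) (by simp)]
    by_cases h : x (Fin.last k) = 0
    · simp [h, hd.ne']
    · have := ZMod.pow_card_sub_one_eq_one (p := d+1) h
      simp only [Nat.add_sub_cancel] at this
      simp [h, this]
  simp only [h1, Finset.sum_sub_distrib]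
  rw [transl_0 (Fin.last k) g hgt, zero_sub]
  congr 1
  rw [← hc (fun i => if i ∈ N then 1 else 0) (by simp [hN]), ← Finset.sum_filter]
  refine Finset.sum_nbij' (fun x i => x i.castSucc) (fun z => Fin.snoc (α := fun _ => ZMod (d+1)) z 0)
    ?_ ?_ ?_ ?_ ?_
  · simp
  · simp
  · intro x hx
    simp at hx
    conv_rhs => rw [← Fin.snoc_init_self x, hx]
    rfl
  · intro x hx; simp
  · intro x hx
    simp at hx
    rw [hg, hx, mul_comm]
    congr 1
    simp only [zero_sub]
    rw [Finset.prod_neg, hN, he.neg_one_pow, one_mul]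
    simp [pow_ite, Finset.prod_ite_mem]

lemma coeff_sum (hd : 0 < d) {n : ℕ} (Q : MvPolynomial (Fin n) (ZMod (d+1)))
    (hQ : Q.totalDegree ≤ n * d) :
    ∑ x, MvPolynomial.eval x Q =
      (-1) ^ n * Q.coeff (Finsupp.equivFunOnFinite.symm fun _ => d) := by
  simp only [MvPolynomial.eval_eq']
  rw [Finset.sum_comm]
  have key : ∀ m : Fin n →₀ ℕ, ∑ x : Fin n → ZMod (d+1), Q.coeff m * ∏ i, x i ^ m i
      = Q.coeff m * ∏ i, ∑ a : ZMod (d+1), a ^ m i := by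
    intro m
    rw [← Finset.mul_sum, Finset.prod_univ_sum]
    simp
  simp only [key]
  rw [Finset.sum_eq_single (Finsupp.equivFunOnFinite.symm fun _ => d)]
  · simp [hpowd hd, mul_comm]
  · intro m hm hne
    have : ∃ i, m i < d := by
      by_contra! hcon
      apply hne
      have hle := (MvPolynomial.le_totalDegree hm).trans hQ
      rw [Finsupp.sum_fintype _ _ (by simp)] at hle
      have : ∑ i : Fin n, d = ∑ i, m i := le_antisymm (Finset.sum_le_sum fun i _ => hcon i) (by simpa using hle)
      have := (Finset.sum_eq_sum_iff_of_le (fun i _ => hcon i)).1 this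
      ext i
      simp [this i]
    obtain ⟨i, hi⟩ := this
    rw [Finset.prod_eq_zero (Finset.mem_univ i) (hpowlt hi), mul_zero]
  · intro h
    rw [MvPolynomial.notMem_support_iff.1 h, zero_mul]

open Classical in
noncomputable def PG (A : ℕ → ℕ → Prop) (k : ℕ) {R : Type*} [CommRing R] (x : Fin k → R) : R :=
  ∏ j : Fin k, ∏ i : Fin k, if (i < j ∧ A i j) then x j - x i else 1

noncomputable def WV (d m : ℕ) {R : Type*} [CommRing R] (x : Fin (d + m) → R) : R :=
  ∑ σ : Equiv.Perm (Fin d), ((Equiv.Perm.sign σ : ℤ) : R) *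
    ∏ i : Fin d, x (Fin.castAdd m i) ^ ((σ i).rev : ℕ)

lemma WV_eq (d m : ℕ) {R : Type*} [CommRing R] (x : Fin (d + m) → R) :
    WV d m x = ∏ i : Fin d, ∏ j ∈ Finset.Ioi i, (x (Fin.castAdd m i) - x (Fin.castAdd m j)) := by
  have := Matrix.det_projVandermonde (fun _ => (1:R)) (fun i : Fin d => x (Fin.castAdd m i))
  rw [← Matrix.det_transpose, Matrix.det_apply'] at this
  simp only [one_mul] at this
  rw [← this]
  simp [WV, Matrix.projVandermonde_apply]

lemma PG_base (A : ℕ → ℕ → Prop) (d : ℕ) {R : Type*} [CommRing R] (x : Fin d → R)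
    (hA : ∀ i j, i < j → j < d → A i j) :
    PG A d x = ∑ σ : Equiv.Perm (Fin d), ((Equiv.Perm.sign σ : ℤ) : R) *
      ∏ i : Fin d, x i ^ (σ i : ℕ) := by
  have := Matrix.det_vandermonde x
  rw [← Matrix.det_transpose, Matrix.det_apply'] at this
  simp only [Matrix.transpose_apply, Matrix.vandermonde_apply] at this
  rw [this, PG, Finset.prod_comm]
  refine Finset.prod_congr rfl fun i _ => ?_
  rw [← Finset.prod_filter]
  refine Finset.prod_congr ?_ fun _ _ => rfl
  ext j
  simp only [Finset.mem_filter, Finset.mem_univ, true_and, Finset.mem_Ioi, and_iff_left_iff_imp]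
  intro h
  exact hA _ _ h j.2

lemma PG_transl (A : ℕ → ℕ → Prop) (k : ℕ) {R : Type*} [CommRing R] (x : Fin k → R) (a : R) :
    PG A k (fun i => x i + a) = PG A k x := by
  simp [PG]

lemma WV_transl (d m : ℕ) {R : Type*} [CommRing R] (x : Fin (d + m) → R) (a : R) :
    WV d m (fun i => x i + a) = WV d m x := by
  simp [WV_eq]

open Classical in
lemma PG_succ (A : ℕ → ℕ → Prop) (k : ℕ) {R : Type*} [CommRing R] (x : Fin (k+1) → R) :
    PG A (k+1) x = PG A k (fun i => x i.castSucc) *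
      ∏ j ∈ Finset.univ.filter (fun j : Fin k => A j k), (x (Fin.last k) - x j.castSucc) := by
  rw [PG, Fin.prod_univ_castSucc]
  congr 1
  · rw [PG]
    refine Finset.prod_congr rfl fun j _ => ?_
    rw [Fin.prod_univ_castSucc]
    have : ¬ (Fin.last k < j.castSucc) := not_lt.2 (Fin.le_last _)
    simp [this]
  · rw [Fin.prod_univ_castSucc, Finset.prod_filter]
    simp [Fin.castSucc_lt_last]

lemma base_sum (hd : 0 < d) (A : ℕ → ℕ → Prop) 
    (hA : ∀ i j, i < j → j < d → A i j) (r : Fin d → ℕ) (hr : ∑ i, r i = d) :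
    ∑ x : Fin d → ZMod (d+1), (∏ i, x i ^ r i) * (PG A d x * WV d 0 x) = (-1) ^ (d+1) := by
  have ht : ∀ (x : Fin d → ZMod (d+1)) a,
      PG A d (fun i => x i + a) * WV d 0 (fun i : Fin (d+0) => x i + a) = PG A d x * WV d 0 x := by
    intro x a
    rw [PG_transl, WV_transl d 0 x a]
  rw [transl_r hd ⟨0, hd⟩ (fun x => PG A d x * WV d 0 x) ht r hr,
    ← transl_r hd ⟨0, hd⟩ (fun x => PG A d x * WV d 0 x) ht (fun _ => 1) (by simp)]
  have h1 : ∀ x : Fin d → ZMod (d+1), (∏ i, x i ^ 1) * (PG A d x * WV d 0 x) =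
      ∑ τ : Equiv.Perm (Fin d), ∑ σ : Equiv.Perm (Fin d),
        (((Equiv.Perm.sign τ : ℤ) : ZMod (d+1)) * ((Equiv.Perm.sign σ : ℤ) : ZMod (d+1))) *
        ∏ i, x i ^ (1 + (τ i : ℕ) + ((σ i).rev : ℕ)) := by
    intro x
    rw [PG_base A d x hA, WV, Finset.sum_mul_sum, Finset.mul_sum]
    refine Finset.sum_congr rfl fun τ _ => ?_
    rw [Finset.mul_sum]
    refine Finset.sum_congr rfl fun σ _ => ?_
    simp only [pow_add, Finset.prod_mul_distrib]
    simp only [Fin.castAdd_zero, Fin.cast_eq_self, Nat.add_zero]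
    ring
  simp only [h1]
  rw [Finset.sum_comm]
  have h2 : ∀ τ σ : Equiv.Perm (Fin d), ∑ x : Fin d → ZMod (d+1),
      ∏ i, x i ^ (1 + (τ i : ℕ) + ((σ i).rev : ℕ)) = if τ = σ then (-1)^d else 0 := by
    intro τ σ
    have := (Finset.prod_univ_sum (fun _ : Fin d => (Finset.univ : Finset (ZMod (d+1))))
      (fun i a => a ^ (1 + (τ i : ℕ) + ((σ i).rev : ℕ)))).symm
    rw [Fintype.piFinset_univ] at this
    rw [this]
    split_ifs with h
    · subst h
      have : ∀ i, 1 + (τ i : ℕ) + ((τ i).rev : ℕ) = d := by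
        intro i; rw [Fin.val_rev]; omega
      simp [-Fin.val_rev, this, hpowd hd]
    · obtain ⟨i, hi⟩ : ∃ i, τ i ≠ σ i := by
        by_contra! hc; exact h (Equiv.ext hc)
      refine Finset.prod_eq_zero (Finset.mem_univ i) (hpow2 ?_ ?_)
      · rw [Fin.val_rev]; 
        have := Fin.val_ne_of_ne hi
        omega
      · rw [Fin.val_rev]; omega
  have h3 : ∀ τ : Equiv.Perm (Fin d), ∑ x : Fin d → ZMod (d+1), ∑ σ : Equiv.Perm (Fin d),
        (((Equiv.Perm.sign τ : ℤ) : ZMod (d+1)) * ((Equiv.Perm.sign σ : ℤ) : ZMod (d+1))) *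
        ∏ i, x i ^ (1 + (τ i : ℕ) + ((σ i).rev : ℕ)) = (-1)^d := by
    intro τ
    rw [Finset.sum_comm]
    simp only [← Finset.mul_sum, h2]
    simp only [mul_ite, mul_zero, Finset.sum_ite_eq, Finset.mem_univ, if_true]
    rw [← Int.cast_mul, ← Units.val_mul]
    simp
  simp only [h3]
  have hw := ZMod.wilsons_lemma (d+1)
  simp only [Nat.add_sub_cancel] at hw
  simp [Fintype.card_perm, hw, pow_succ]

open Classical in
lemma main_sum (hd : 0 < d) (he : Even d) (A : ℕ → ℕ → Prop) 
    (hA : ∀ i j, i < j → j < d → A i j) (m : ℕ)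
    (hN : ∀ j, d ≤ j → j < d + m → (Finset.univ.filter (fun i : Fin j => A i j)).card = d)
    (r : Fin (d+m) → ℕ) (hr : ∑ i, r i = d) :
    ∑ x : Fin (d+m) → ZMod (d+1), (∏ i, x i ^ r i) * (PG A (d+m) x * WV d m x)
      = (-1) ^ (d+m+1) := by
  induction m with
  | zero => exact base_sum hd A hA r hr
  | succ m ih =>
    have := step hd he (k := d+m) (fun x => PG A (d+m) x * WV d m x)
      (by intro x a; simp only [PG_transl, WV_transl]) ((-1)^(d+m+1))
      (fun r hr => ih (fun j h1 h2 => hN j h1 (by omega)) r hr)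
      (Finset.univ.filter (fun j : Fin (d+m) => A j (d+m)))
      (hN (d+m) (by omega) (by omega))
      (fun x => PG A (d+(m+1)) x * WV d (m+1) x)
      (by
        intro x
        have h := PG_succ A (d+m) x
        have h' : WV d (m+1) x = WV d m (fun i : Fin (d+m) => x i.castSucc) := rfl
        simp only [h']
        rw [mul_right_comm]
        exact congrArg (· * _) h) r hr
    rw [show d + (m+1) + 1 = (d+m+1)+1 by ring, pow_succ, mul_neg_one]
    exact this

end

def eS (d m : ℕ) (σ : Equiv.Perm (Fin d)) (i : Fin (d+m)) : ℕ :=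
  if h : (i : ℕ) < d then (σ ⟨(i : ℕ), h⟩ : ℕ) + 1 else d

lemma eS_left (d m : ℕ) (σ : Equiv.Perm (Fin d)) (i : Fin d) :
    eS d m σ (Fin.castAdd m i) = σ i + 1 := by simp [eS]

lemma eS_right (d m : ℕ) (σ : Equiv.Perm (Fin d)) (i : Fin m) :
    eS d m σ (Fin.natAdd d i) = d := by simp [eS]

lemma eS_le (d m : ℕ) (σ : Equiv.Perm (Fin d)) (i : Fin (d+m)) : eS d m σ i ≤ d := by
  rw [eS]; split_ifs <;> omega

lemma PG_map (A : ℕ → ℕ → Prop) (k : ℕ) {R S : Type*} [CommRing R] [CommRing S] (φ : R →+* S)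
    (x : Fin k → R) : φ (PG A k x) = PG A k (fun i => φ (x i)) := by
  simp only [PG, map_prod]
  refine Finset.prod_congr rfl fun i _ => Finset.prod_congr rfl fun j _ => ?_
  split_ifs <;> simp

open Classical in
lemma PG_deg (A : ℕ → ℕ → Prop) (k : ℕ) {R : Type*} [CommRing R] [Nontrivial R] :
    (PG A k (MvPolynomial.X : Fin k → MvPolynomial (Fin k) R)).totalDegree ≤
      ∑ j : Fin k, (Finset.univ.filter (fun i : Fin k => i < j ∧ A i j)).card := by
  rw [PG]
  refine (MvPolynomial.totalDegree_finsetProd _ _).trans (Finset.sum_le_sum fun j _ => ?_)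
  refine (MvPolynomial.totalDegree_finsetProd _ _).trans ?_
  rw [Finset.card_filter]
  refine Finset.sum_le_sum fun i _ => ?_
  split_ifs with h
  · refine (MvPolynomial.totalDegree_sub _ _).trans ?_
    simp
  · simp

open Classical in
lemma card_back (A : ℕ → ℕ → Prop) (k : ℕ) (j : Fin k) :
    (Finset.univ.filter (fun i : Fin k => i < j ∧ A i j)).card =
    (Finset.univ.filter (fun i : Fin (j:ℕ) => A i j)).card := by
  symm
  refine Finset.card_bij (fun i _ => Fin.castLE j.2.le i) ?_ ?_ ?_
  · intro i hi
    simp only [Finset.mem_filter, Finset.mem_univ, true_and] at hi ⊢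
    exact ⟨i.2, hi⟩
  · intro a _ b _ h
    simpa [Fin.ext_iff] using h
  · intro b hb
    simp only [Finset.mem_filter, Finset.mem_univ, true_and] at hb
    exact ⟨⟨b, hb.1⟩, by simpa using hb.2, rfl⟩

open Classical in
lemma term_sum {d : ℕ} [Fact (Nat.Prime (d+1))] (hd : 0 < d) (A : ℕ → ℕ → Prop) (m : ℕ)
    (hN : ∀ j, d ≤ j → j < d + m → (Finset.univ.filter (fun i : Fin j => A i j)).card = d)
    (r : Fin (d+m) → ℕ) (hr : ∑ i, r i = d) (σ : Equiv.Perm (Fin d)) :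
    (if ∀ i, r i ≤ eS d m σ i then
      MvPolynomial.coeff (Finsupp.equivFunOnFinite.symm fun i => eS d m σ i - r i)
        (PG A (d+m) (MvPolynomial.X : _ → MvPolynomial (Fin (d+m)) (ZMod (d+1)))) else 0)
    = (-1)^(d+m) * ∑ x : Fin (d+m) → ZMod (d+1), (∏ i, x i ^ r i) * (PG A (d+m) x *
        ∏ i : Fin d, x (Fin.castAdd m i) ^ ((σ i).rev : ℕ)) := by
  set F := PG A (d+m) (MvPolynomial.X : _ → MvPolynomial (Fin (d+m)) (ZMod (d+1))) with hF
  let s : Fin (d+m) →₀ ℕ := Finsupp.equivFunOnFinite.symm r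
  let e : Fin (d+m) →₀ ℕ := Finsupp.equivFunOnFinite.symm (eS d m σ)
  let t : Fin (d+m) →₀ ℕ := Finsupp.equivFunOnFinite.symm (fun i => d - eS d m σ i)
  have het : e + t = Finsupp.equivFunOnFinite.symm (fun _ => d) := by
    ext i
    have := eS_le d m σ i
    simp [e, t]; omega
  have hcs := coeff_sum hd (F * MvPolynomial.monomial s 1 * MvPolynomial.monomial t 1) ?_
  · rw [← het, MvPolynomial.coeff_mul_monomial, MvPolynomial.coeff_mul_monomial'] at hcs
    have hl : (if ∀ i, r i ≤ eS d m σ i then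
      MvPolynomial.coeff (Finsupp.equivFunOnFinite.symm fun i => eS d m σ i - r i) F else 0)
      = (if s ≤ e then MvPolynomial.coeff (e - s) F * 1 else 0) * 1 := by
      rw [mul_one, mul_one]
      refine if_congr Iff.rfl ?_ rfl
      congr 1
      ext i
      simp [e, s]
    rw [hl]
    have hx : ∀ x : Fin (d+m) → ZMod (d+1), MvPolynomial.eval x
        (F * MvPolynomial.monomial s 1 * MvPolynomial.monomial t 1) =
        (∏ i, x i ^ r i) * (PG A (d+m) x *
        ∏ i : Fin d, x (Fin.castAdd m i) ^ ((σ i).rev : ℕ)) := by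
      intro x
      have h1 : MvPolynomial.eval x F = PG A (d+m) x := by
        simp only [hF, PG, map_prod, apply_ite (MvPolynomial.eval x), map_sub, map_one,
          MvPolynomial.eval_X]
      have h2 : MvPolynomial.eval x (MvPolynomial.monomial s 1) = ∏ i, x i ^ r i := by
        rw [MvPolynomial.eval_monomial, Finsupp.prod_fintype _ _ (by simp)]
        simp [s]
      have h3 : MvPolynomial.eval x (MvPolynomial.monomial t 1) =
          ∏ i : Fin d, x (Fin.castAdd m i) ^ ((σ i).rev : ℕ) := by
        rw [MvPolynomial.eval_monomial, Finsupp.prod_fintype _ _ (by simp), Fin.prod_univ_add]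
        simp [t, eS_left, eS_right]
      rw [map_mul, map_mul, h1, h2, h3]
      ring
    simp only [hx] at hcs
    rw [hcs, ← mul_assoc, ← mul_pow]
    simp
  · have h1 : F.totalDegree ≤ ∑ i : Fin d, (i:ℕ) + m * d := by
      refine (PG_deg A (d+m)).trans ?_
      simp only [card_back]
      rw [Fin.sum_univ_add]
      refine add_le_add (Finset.sum_le_sum fun i _ => ?_) ?_
      · exact (Finset.card_filter_le _ _).trans (by simp)
      · rw [Finset.sum_congr rfl fun i _ => hN (Fin.natAdd d i : Fin (d+m)) (by simp) (by simp)]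
        simp
    have h2 : (MvPolynomial.monomial s (1 : ZMod (d+1))).totalDegree ≤ d := by
      rw [MvPolynomial.totalDegree_monomial _ one_ne_zero, Finsupp.sum_fintype _ _ (by simp)]
      simp [s, hr]
    have h3 : (MvPolynomial.monomial t (1 : ZMod (d+1))).totalDegree ≤ ∑ i : Fin d, (i.rev:ℕ) := by
      rw [MvPolynomial.totalDegree_monomial _ one_ne_zero, Finsupp.sum_fintype _ _ (by simp),
        Fin.sum_univ_add, ← Equiv.sum_comp σ (fun i : Fin d => (i.rev : ℕ))]
      simp [t, eS_left, eS_right]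
    have h4 : ∑ i : Fin d, (i:ℕ) + ∑ i : Fin d, (i.rev:ℕ) + d = d * d := by
      have : ∀ i : Fin d, (i:ℕ) + (i.rev:ℕ) + 1 = d := by
        intro i; rw [Fin.val_rev]; omega
      have h := Finset.sum_congr rfl (fun i (_ : i ∈ (Finset.univ : Finset (Fin d))) => this i)
      simp only [Finset.sum_add_distrib] at h
      simpa [-Fin.val_rev] using h
    have h5 := MvPolynomial.totalDegree_mul (F * MvPolynomial.monomial s 1)
      (MvPolynomial.monomial t (1 : ZMod (d+1)))
    have h6 := MvPolynomial.totalDegree_mul F (MvPolynomial.monomial s (1 : ZMod (d+1)))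
    rw [add_mul]
    omega

open MvPolynomial in
/-- For a permutation `σ` of `{1,…,d}` (encoded as `σ : Equiv.Perm (Fin d)`, where
index `i` gets value `(σ i : ℕ) + 1 ∈ {1,…,d}`), the exponent of `x_i` in the monomial
is `σ(i) - r(i)` for `i ≤ d` and `d - r(i)` for `i > d`; the coefficient is interpreted
as `0` when some exponent is negative. -/
theorem stmt18 (d n : ℕ) (hd : 2 ≤ d) (hp : Nat.Prime (d + 1)) (hn : d ≤ n)
    (G : SimpleGraph (Fin n)) [DecidableRel G.Adj]
    (hclique : ∀ i j : Fin n, (i : ℕ) < d → (j : ℕ) < d → i ≠ j → G.Adj i j)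
    (hback : ∀ i : Fin n, d ≤ (i : ℕ) →
      (Finset.univ.filter fun j => j < i ∧ G.Adj j i).card = d)
    (r : Fin n → ℕ) (hr : ∑ i, r i = d) :
    (∑ σ : Equiv.Perm (Fin d), (Equiv.Perm.sign σ : ℤ) *
      (if ∀ i : Fin n,
            r i ≤ (if h : (i : ℕ) < d then (σ ⟨(i : ℕ), h⟩ : ℕ) + 1 else d) then
        MvPolynomial.coeff
          (Finsupp.equivFunOnFinite.symm fun i : Fin n =>
            (if h : (i : ℕ) < d then (σ ⟨(i : ℕ), h⟩ : ℕ) + 1 else d) - r i)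
          (∏ e ∈ Finset.univ.filter
              fun p : Fin n × Fin n => p.1 < p.2 ∧ G.Adj p.1 p.2,
            (MvPolynomial.X e.2 - MvPolynomial.X e.1 : MvPolynomial (Fin n) ℤ))
      else 0))
      ≡ -1 [ZMOD ((d : ℤ) + 1)] := by
  classical
  obtain ⟨m, rfl⟩ := Nat.exists_eq_add_of_le hn
  have : Fact (Nat.Prime (d+1)) := ⟨hp⟩
  have hd0 : 0 < d := by omega
  have he : Even d := by
    have h := hp.odd_of_ne_two (by omega)
    rcases Nat.even_or_odd d with h' | h'
    · exact h'
    · exact absurd h'.add_one (Nat.not_even_iff_odd.2 h)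
  obtain ⟨A, hAG⟩ : ∃ A : ℕ → ℕ → Prop, ∀ i j : Fin (d+m), A i j ↔ G.Adj i j :=
    ⟨fun i j => ∃ (hi : i < d + m) (hj : j < d + m), G.Adj ⟨i, hi⟩ ⟨j, hj⟩, fun i j =>
    ⟨fun ⟨_, _, h⟩ => h, fun h => ⟨i.2, j.2, h⟩⟩⟩
  have hA : ∀ i j, i < j → j < d → A i j := fun i j hij hj =>
    (hAG ⟨i, by omega⟩ ⟨j, by omega⟩).2 (hclique _ _ (by simp; omega) (by simpa using hj)
      (by simp [Fin.ext_iff]; omega))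
  have hN : ∀ j, d ≤ j → j < d + m →
      (Finset.univ.filter (fun i : Fin j => A i j)).card = d := by
    intro j h1 h2
    have := hback ⟨j, h2⟩ h1
    refine (card_back A (d+m) ⟨j, h2⟩).symm.trans ?_
    refine Eq.trans ?_ this
    congr 1
    ext i
    simp only [Finset.mem_filter, Finset.mem_univ, true_and]
    rw [← hAG]
  have hP : (∏ e ∈ Finset.univ.filter
              fun p : Fin (d+m) × Fin (d+m) => p.1 < p.2 ∧ G.Adj p.1 p.2,
            (MvPolynomial.X e.2 - MvPolynomial.X e.1 : MvPolynomial (Fin (d+m)) ℤ))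
      = PG A (d+m) MvPolynomial.X := by
    rw [Finset.prod_filter, Fintype.prod_prod_type_right, PG]
    refine Finset.prod_congr rfl fun i _ => Finset.prod_congr rfl fun j _ => ?_
    simp only [hAG]
  have hM : MvPolynomial.map (Int.castRingHom (ZMod (d+1)))
      (PG A (d+m) (MvPolynomial.X : _ → MvPolynomial (Fin (d+m)) ℤ)) = PG A (d+m) MvPolynomial.X := by
    rw [PG_map]
    simp only [MvPolynomial.map_X]
  rw [hP, show ((d:ℤ)+1) = ((d+1 : ℕ) : ℤ) by push_cast; rfl, ← ZMod.intCast_eq_intCast_iff,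
    Int.cast_sum]
  have hterm : ∀ σ : Equiv.Perm (Fin d), ((((Equiv.Perm.sign σ : ℤ) *
      (if ∀ i : Fin (d+m),
            r i ≤ (if h : (i : ℕ) < d then (σ ⟨(i : ℕ), h⟩ : ℕ) + 1 else d) then
        MvPolynomial.coeff
          (Finsupp.equivFunOnFinite.symm fun i : Fin (d+m) =>
            (if h : (i : ℕ) < d then (σ ⟨(i : ℕ), h⟩ : ℕ) + 1 else d) - r i)
          (PG A (d+m) (MvPolynomial.X : _ → MvPolynomial (Fin (d+m)) ℤ))
      else 0)) : ℤ) : ZMod (d+1)) = ((Equiv.Perm.sign σ : ℤ) : ZMod (d+1)) *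
      ((-1)^(d+m) * ∑ x : Fin (d+m) → ZMod (d+1), (∏ i, x i ^ r i) * (PG A (d+m) x *
        ∏ i : Fin d, x (Fin.castAdd m i) ^ ((σ i).rev : ℕ))) := by
    intro σ
    rw [← term_sum hd0 A m hN r hr σ, ← hM, Int.cast_mul, Int.cast_ite, MvPolynomial.coeff_map,
      Int.cast_zero]
    rfl
  have hfin := main_sum hd0 he A hA m hN r hr
  have hfin2 : ∑ σ : Equiv.Perm (Fin d), ((Equiv.Perm.sign σ : ℤ) : ZMod (d+1)) *
      ((-1)^(d+m) * ∑ x : Fin (d+m) → ZMod (d+1), (∏ i, x i ^ r i) * (PG A (d+m) x *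
        ∏ i : Fin d, x (Fin.castAdd m i) ^ ((σ i).rev : ℕ))) = (-1)^(d+m) *
    ∑ x : Fin (d+m) → ZMod (d+1), (∏ i, x i ^ r i) * (PG A (d+m) x * WV d m x) := by
    simp only [WV, Finset.mul_sum]
    rw [Finset.sum_comm]
    refine Finset.sum_congr rfl fun x _ => Finset.sum_congr rfl fun σ _ => ?_
    ring
  rw [Finset.sum_congr rfl fun σ _ => hterm σ, hfin2, hfin, pow_succ, ← mul_assoc, ← mul_pow]
  simp
end
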